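/- Let (T₀, T̃₀) be a joint pair of closed abstract Friedrichs operators on a complex Hilbert space H, and let T_r be any bijective realisation of T₀, i.e. T_r = T₁|_{dom T_r} with W₀ ⊆ dom T_r ⊆ W, dom T_r closed in the graph norm, and T_r : dom T_r → H bijective. Then the graph space decomposes as the direct sums W = W₀ ∔ T_r^{-1}(ker T̃₁) ∔ ker T₁ and W = W₀ ∔ (T_r*)^{-1}(ker T₁) ∔ ker T̃₁. -/

import Mathlib

open LinearPMap
open scoped LinearPMap

noncomputable section

variable {H : Type*} [NormedAddCommGroup H] [InnerProductSpace ℂ H] [CompleteSpace H]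

local notation "⟪" x ", " y "⟫" => @inner ℂ _ _ x y

/-- Conditions (T1)–(T2) for a pair of operators with common dense domain. -/
structure IsPreFriedrichsPair (T Tt : H →ₗ.[ℂ] H) : Prop where
  dom_eq : T.domain = Tt.domain
  dense' : Dense (T.domain : Set H)
  t1 : ∀ (φ : T.domain) (ψ : Tt.domain), ⟪T φ, (ψ : H)⟫ = ⟪(φ : H), Tt ψ⟫
  t2 : ∃ c : ℝ, 0 < c ∧ ∀ φ : (T + Tt).domain, ‖(T + Tt) φ‖ ≤ c * ‖(φ : H)‖

/-- A joint pair of abstract Friedrichs operators: (T1)–(T3). -/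
structure IsFriedrichsPair (T Tt : H →ₗ.[ℂ] H) extends IsPreFriedrichsPair T Tt : Prop where
  t3 : ∃ μ₀ : ℝ, 0 < μ₀ ∧ ∀ φ : (T + Tt).domain,
        2 * μ₀ * ‖(φ : H)‖ ^ 2 ≤ (⟪(T + Tt) φ, (φ : H)⟫).re

/-- The kernel of a partially defined operator, as a submodule of the ambient space. -/
def pKer (f : H →ₗ.[ℂ] H) : Submodule ℂ H :=
  (LinearMap.ker f.toFun).map f.domain.subtype

/-- The preimage of a submodule `K` under a partially defined operator, as a submodule of the
ambient space. -/
def pPreimage (f : H →ₗ.[ℂ] H) (K : Submodule ℂ H) : Submodule ℂ H :=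
  (Submodule.comap f.toFun K).map f.domain.subtype

theorem mem_pKer_iff' (f : H →ₗ.[ℂ] H) (x : H) :
    x ∈ pKer f ↔ ∃ h : x ∈ f.domain, f ⟨x, h⟩ = 0 := by
  constructor
  · rintro ⟨y, hy, rfl⟩
    exact ⟨y.2, hy⟩
  · rintro ⟨h, hx⟩
    exact ⟨⟨x, h⟩, hx, rfl⟩

theorem mem_pPreimage_iff' (f : H →ₗ.[ℂ] H) (K : Submodule ℂ H) (x : H) :
    x ∈ pPreimage f K ↔ ∃ h : x ∈ f.domain, f ⟨x, h⟩ ∈ K := by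
  constructor
  · rintro ⟨y, hy, rfl⟩
    exact ⟨y.2, hy⟩
  · rintro ⟨h, hx⟩
    exact ⟨⟨x, h⟩, hx, rfl⟩

theorem closed_range_aux (A : H →ₗ.[ℂ] H) (hA : A.IsClosed) (μ : ℝ) (hμ : 0 < μ)
    (hb : ∀ x : A.domain, μ * ‖(x : H)‖ ≤ ‖A x‖) :
    IsClosed ((LinearMap.range A.toFun : Submodule ℂ H) : Set H) := by
  have hc : IsClosed (A.graph : Set (H × H)) := hA
  haveI : CompleteSpace A.graph := hc.completeSpace_coe
  let g : A.graph → H := fun p => p.1.2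
  have hu : UniformContinuous g := uniformContinuous_snd.comp uniformContinuous_subtype_val
  have hal : AntilipschitzWith (Real.toNNReal (max 1 μ⁻¹)) g := by
    apply AntilipschitzWith.of_le_mul_dist
    rintro ⟨p, hp⟩ ⟨q, hq⟩
    have hpq := A.graph.sub_mem hp hq
    obtain ⟨y, hy1, hy2⟩ := (LinearPMap.mem_graph_iff A).1 hpq
    have hy := hb y
    rw [hy1, hy2] at hy
    have hm : 0 ≤ max 1 μ⁻¹ := le_trans zero_le_one (le_max_left _ _)
    rw [Real.coe_toNNReal _ hm]
    change dist p q ≤ _ * dist p.2 q.2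
    rw [dist_eq_norm, dist_eq_norm, Prod.norm_def]
    have h2 : (p - q).2 = p.2 - q.2 := rfl
    rw [h2] at hy ⊢
    apply max_le
    · calc ‖(p - q).1‖ = μ⁻¹ * (μ * ‖(p - q).1‖) := by field_simp
        _ ≤ μ⁻¹ * ‖p.2 - q.2‖ := by gcongr
        _ ≤ _ := by gcongr; exact le_max_right _ _
    · calc ‖p.2 - q.2‖ = 1 * ‖p.2 - q.2‖ := by ring
        _ ≤ _ := by gcongr; exact le_max_left _ _
  have hr := hal.isClosed_range hu
  convert hr using 1
  ext y
  constructor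
  · rintro ⟨x, rfl⟩
    exact ⟨⟨((x : H), A x), A.mem_graph x⟩, rfl⟩
  · rintro ⟨⟨p, hp⟩, rfl⟩
    obtain ⟨y, hy1, hy2⟩ := (LinearPMap.mem_graph_iff A).1 hp
    exact ⟨y, hy2⟩

theorem mem_pKer_adjoint_of_orth (A : H →ₗ.[ℂ] H) (hd : Dense (A.domain : Set H)) (k : H) :
    k ∈ pKer (A†) ↔ ∀ x : A.domain, ⟪k, A x⟫ = 0 := by
  rw [mem_pKer_iff']
  constructor
  · rintro ⟨h, hk⟩ x
    rw [← LinearPMap.adjoint_isFormalAdjoint hd ⟨k, h⟩ x, hk, inner_zero_left]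
  · intro h
    have hk : k ∈ (A†).domain :=
      LinearPMap.mem_adjoint_domain_of_exists k ⟨0, fun x => by rw [h x, inner_zero_left]⟩
    exact ⟨hk, LinearPMap.adjoint_apply_eq hd _ fun x => by rw [inner_zero_left, h x]⟩

theorem decomp_aux (A M R : H →ₗ.[ℂ] H) (hd : Dense (A.domain : Set H)) (hA : A.IsClosed)
    (μ : ℝ) (hμ : 0 < μ) (hb : ∀ x : A.domain, μ * ‖(x : H)‖ ≤ ‖A x‖)
    (hAM : A ≤ M) (hRM : R ≤ M)
    (hinj : ∀ x : R.domain, R x = 0 → x = 0) (hsurj : ∀ y, ∃ x : R.domain, R x = y) :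
    A.domain ⊔ pPreimage R (pKer (A†)) ⊔ pKer M = M.domain ∧
      ∀ u₀ ∈ A.domain, ∀ v ∈ pPreimage R (pKer (A†)),
        ∀ ν ∈ pKer M, u₀ + v + ν = 0 → u₀ = 0 ∧ v = 0 ∧ ν = 0 := by
  have hAv : ∀ (x : H) (h : x ∈ A.domain) (h' : x ∈ M.domain), M ⟨x, h'⟩ = A ⟨x, h⟩ :=
    fun x h h' => (hAM.2 (x := ⟨x, h⟩) (y := ⟨x, h'⟩) rfl).symm
  have hRv : ∀ (x : H) (h : x ∈ R.domain) (h' : x ∈ M.domain), M ⟨x, h'⟩ = R ⟨x, h⟩ :=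
    fun x h h' => (hRM.2 (x := ⟨x, h⟩) (y := ⟨x, h'⟩) rfl).symm
  constructor
  · apply le_antisymm
    · refine sup_le (sup_le hAM.1 ?_) ?_
      · intro x hx
        obtain ⟨h, -⟩ := (mem_pPreimage_iff' _ _ _).1 hx
        exact hRM.1 h
      · intro x hx
        exact ((mem_pKer_iff' _ _).1 hx).1
    · intro w hw
      let K : Submodule ℂ H := LinearMap.range A.toFun
      haveI : CompleteSpace K := (closed_range_aux A hA μ hμ hb).completeSpace_coe
      obtain ⟨a, ha, k, hk, hak⟩ := K.exists_add_mem_mem_orthogonal (M ⟨w, hw⟩)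
      obtain ⟨φ, hφ⟩ := ha
      obtain ⟨v, hv⟩ := hsurj k
      have hkk : k ∈ pKer (A†) := (mem_pKer_adjoint_of_orth A hd k).2 fun x =>
        Submodule.inner_left_of_mem_orthogonal (K := K) ⟨x, rfl⟩ hk
      have hφM := hAM.1 φ.2
      have hvM := hRM.1 v.2
      have hν : w - φ - v ∈ pKer M := by
        refine (mem_pKer_iff' _ _).2 ⟨M.domain.sub_mem (M.domain.sub_mem hw hφM) hvM, ?_⟩
        have : M ⟨w - φ - v, M.domain.sub_mem (M.domain.sub_mem hw hφM) hvM⟩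
            = M ⟨w, hw⟩ - M ⟨φ, hφM⟩ - M ⟨v, hvM⟩ := by
          rw [← LinearPMap.map_sub, ← LinearPMap.map_sub]; rfl
        rw [this, hAv _ φ.2, hRv _ v.2, hak, ← hφ]
        change A.toFun φ + k - A.toFun φ - R v = 0
        rw [hv]; abel
      have e : w = φ + v + (w - φ - v) := by abel
      rw [e]
      exact Submodule.add_mem_sup (Submodule.add_mem_sup φ.2
        ((mem_pPreimage_iff' _ _ _).2 ⟨v.2, by simpa [hv] using hkk⟩)) hν
  · intro u hu v hv ν hν h0
    obtain ⟨hvR, hvk⟩ := (mem_pPreimage_iff' _ _ _).1 hv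
    obtain ⟨hνM, hν0⟩ := (mem_pKer_iff' _ _).1 hν
    have huM := hAM.1 hu
    have hvM := hRM.1 hvR
    have hs : A ⟨u, hu⟩ + R ⟨v, hvR⟩ = 0 := by
      have : M ⟨u, huM⟩ + M ⟨v, hvM⟩ + M ⟨ν, hνM⟩ = 0 := by
        rw [← LinearPMap.map_add, ← LinearPMap.map_add]
        have : (⟨u, huM⟩ + ⟨v, hvM⟩ + ⟨ν, hνM⟩ : M.domain) = 0 := Subtype.ext h0
        rw [this, LinearPMap.map_zero]
      rwa [hν0, hAv _ hu, hRv _ hvR, add_zero] at this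
    have ho := (mem_pKer_adjoint_of_orth A hd _).1 hvk ⟨u, hu⟩
    have hR0 : R ⟨v, hvR⟩ = 0 := by
      have e : A ⟨u, hu⟩ = - R ⟨v, hvR⟩ := eq_neg_of_add_eq_zero_left hs
      rw [e, inner_neg_right, neg_eq_zero, inner_self_eq_zero] at ho
      exact ho
    have hA0 : A ⟨u, hu⟩ = 0 := by simpa [hR0] using hs
    have hv0 : v = 0 := congrArg Subtype.val (hinj _ hR0)
    have hu0 : u = 0 := by
      have := hb ⟨u, hu⟩
      rw [hA0, norm_zero] at this
      change μ * ‖u‖ ≤ 0 at this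
      have : ‖u‖ ≤ 0 := by
        by_contra hc
        push Not at hc
        nlinarith [mul_pos hμ hc]
      exact norm_le_zero_iff.1 this
    refine ⟨hu0, hv0, ?_⟩
    simpa [hu0, hv0] using h0

theorem adjoint_bij_aux (R : H →ₗ.[ℂ] H) (hd : Dense (R.domain : Set H))
    (hc : IsClosed (R.graph : Set (H × H)))
    (hbij : Function.Bijective (fun x : R.domain => R x)) :
    (∀ y : (R†).domain, (R†) y = 0 → y = 0) ∧ ∀ h, ∃ y : (R†).domain, (R†) y = h := by
  constructor
  · rintro ⟨y, hy⟩ h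
    have h2 := LinearPMap.adjoint_isFormalAdjoint hd ⟨y, hy⟩
    obtain ⟨x, hx⟩ := hbij.2 y
    have := h2 x
    simp only at hx
    rw [h, inner_zero_left, hx] at this
    exact Subtype.ext (inner_self_eq_zero.1 this.symm)
  · intro h
    let e : R.domain ≃ₗ[ℂ] H := LinearEquiv.ofBijective R.toFun hbij
    let S : H →ₗ[ℂ] H := R.domain.subtype ∘ₗ e.symm.toLinearMap
    have hRS : ∀ y, R (e.symm y) = y := fun y => e.apply_symm_apply y
    have hSR : ∀ x, S (R x) = x := fun x => congrArg Subtype.val (e.symm_apply_apply x)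
    have hSg : IsClosed (S.graph : Set (H × H)) := by
      have : (S.graph : Set (H × H)) = Prod.swap ⁻¹' (R.graph : Set (H × H)) := by
        ext ⟨a, b⟩
        simp only [SetLike.mem_coe, LinearMap.mem_graph_iff, Set.mem_preimage, Prod.swap_prod_mk,
          LinearPMap.mem_graph_iff]
        constructor
        · rintro rfl
          exact ⟨e.symm a, rfl, hRS a⟩
        · rintro ⟨y, rfl, rfl⟩
          exact (hSR y).symm
      rw [this]
      exact hc.preimage continuous_swap
    let S' : H →L[ℂ] H := ⟨S, S.continuous_of_isClosed_graph hSg⟩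
    have key : ∀ x : R.domain, ⟪h, (x : H)⟫ = ⟪S'.adjoint h, R x⟫ := fun x => by
      rw [ContinuousLinearMap.adjoint_inner_left]
      change _ = ⟪h, S (R x)⟫
      rw [hSR]
    have hm := LinearPMap.mem_adjoint_domain_of_exists (T := R) (S'.adjoint h) ⟨h, key⟩
    exact ⟨⟨_, hm⟩, LinearPMap.adjoint_apply_eq hd _ key⟩

theorem bound_aux (A : H →ₗ.[ℂ] H) (μ : ℝ)
    (h : ∀ x : A.domain, μ * ‖(x : H)‖ ^ 2 ≤ (⟪A x, (x : H)⟫).re) (x : A.domain) :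
    μ * ‖(x : H)‖ ≤ ‖A x‖ := by
  have h1 := (h x).trans ((Complex.re_le_norm _).trans (norm_inner_le_norm (𝕜 := ℂ) (A x) (x : H)))
  rcases (norm_nonneg (x : H)).eq_or_lt with h0 | h0
  · rw [← h0, mul_zero]; exact norm_nonneg _
  · nlinarith

/-- For a joint pair `(T₀, T̃₀)` of closed abstract Friedrichs operators and
any bijective realisation `T_r = T₁|_{V_r}` of `T₀` (its domain closed in the graph norm and
containing `W₀`), the graph space decomposes as the direct sums
`W = W₀ ∔ T_r⁻¹(ker T̃₁) ∔ ker T₁` and `W = W₀ ∔ (T_r*)⁻¹(ker T₁) ∔ ker T̃₁`. -/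
theorem statement12 (T Tt : H →ₗ.[ℂ] H) (hF : IsFriedrichsPair T Tt)
    (hT : T.IsClosed) (hTt : Tt.IsClosed)
    (Vr : Submodule ℂ H) (hVr₀ : T.domain ≤ Vr) (hVrW : Vr ≤ (Tt†).domain)
    (hVrClosed : IsClosed {p : H × H | p.1 ∈ Vr ∧ p ∈ (Tt†).graph})
    (hbij : Function.Bijective
      (fun x : ((Tt†).domRestrict Vr).domain => ((Tt†).domRestrict Vr) x)) :
    (T.domain ⊔ pPreimage ((Tt†).domRestrict Vr) (pKer (T†)) ⊔ pKer (Tt†)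
        = (Tt†).domain ∧
      ∀ u₀ ∈ T.domain, ∀ v ∈ pPreimage ((Tt†).domRestrict Vr) (pKer (T†)),
        ∀ ν ∈ pKer (Tt†), u₀ + v + ν = 0 → u₀ = 0 ∧ v = 0 ∧ ν = 0) ∧
    (T.domain ⊔ pPreimage (((Tt†).domRestrict Vr)†) (pKer (Tt†)) ⊔ pKer (T†)
        = (T†).domain ∧
      ∀ u₀ ∈ T.domain, ∀ v ∈ pPreimage (((Tt†).domRestrict Vr)†) (pKer (Tt†)),
        ∀ ν ∈ pKer (T†), u₀ + v + ν = 0 → u₀ = 0 ∧ v = 0 ∧ ν = 0) := by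
  obtain ⟨⟨hdom, hdense, t1, -⟩, μ, hμ, t3⟩ := hF
  have hdt : Dense (Tt.domain : Set H) := hdom ▸ hdense
  have hfa : T.IsFormalAdjoint Tt := t1
  have hre : ∀ (x : H) (h : x ∈ T.domain) (h' : x ∈ Tt.domain),
      μ * ‖x‖ ^ 2 ≤ (⟪T ⟨x, h⟩, x⟫).re ∧ μ * ‖x‖ ^ 2 ≤ (⟪Tt ⟨x, h'⟩, x⟫).re := by
    intro x h h'
    have h3 := t3 ⟨x, h, h'⟩
    have e : (T + Tt) ⟨x, h, h'⟩ = T ⟨x, h⟩ + Tt ⟨x, h'⟩ := rfl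
    rw [e, inner_add_left, Complex.add_re] at h3
    have e1 : (⟪T ⟨x, h⟩, x⟫).re = (⟪Tt ⟨x, h'⟩, x⟫).re := by
      rw [t1 ⟨x, h⟩ ⟨x, h'⟩, ← inner_conj_symm, Complex.conj_re]
    change 2 * μ * ‖x‖ ^ 2 ≤ (⟪T ⟨x, h⟩, x⟫).re + (⟪Tt ⟨x, h'⟩, x⟫).re at h3
    constructor <;> linarith
  have hbT := bound_aux T μ fun x => (hre x x.2 (by rw [← hdom]; exact x.2)).1
  have hbTt := bound_aux Tt μ fun x => (hre x (by rw [hdom]; exact x.2) x.2).2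
  have hTM : T ≤ Tt† := hfa.symm.le_adjoint hdt
  have hTtM : Tt ≤ T† := hfa.le_adjoint hdense
  set R := (Tt†).domRestrict Vr with hR
  have hRM : R ≤ Tt† := LinearPMap.domRestrict_le
  have hTR : T.domain ≤ R.domain := fun x hx => ⟨hVr₀ hx, hTM.1 hx⟩
  have hTleR : T ≤ R := ⟨hTR, fun x y hxy =>
    (hTM.2 (x := x) (y := ⟨y, hRM.1 y.2⟩) hxy).trans (hRM.2 (x := y) rfl).symm⟩
  have hdR : Dense (R.domain : Set H) := hdense.mono hTR
  have hRc : IsClosed (R.graph : Set (H × H)) := by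
    convert hVrClosed using 1
    ext p
    simp only [SetLike.mem_coe, LinearPMap.mem_graph_iff, Set.mem_ofPred_eq]
    constructor
    · rintro ⟨y, h1, h2⟩
      exact ⟨by rw [← h1]; exact y.2.1, ⟨y, y.2.2⟩, h1, h2⟩
    · rintro ⟨h0, y, h1, h2⟩
      exact ⟨⟨y, by rw [h1]; exact h0, y.2⟩, h1, h2⟩
  obtain ⟨hi, hs⟩ := adjoint_bij_aux R hdR hRc hbij
  have hRadj : R† ≤ T† := by
    apply LinearPMap.IsFormalAdjoint.le_adjoint hdense
    intro x y
    rw [hTleR.2 (x := x) (y := ⟨x, hTR x.2⟩) rfl]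
    exact (LinearPMap.adjoint_isFormalAdjoint hdR).symm ⟨x, hTR x.2⟩ y
  constructor
  · exact decomp_aux T (Tt†) R hdense hT μ hμ hbT hTM hRM
      (fun x hx => hbij.1 (by simpa using hx)) hbij.2
  · rw [hdom]
    exact decomp_aux Tt (T†) (R†) hdt hTt μ hμ hbTt hTtM hRadj hi hs
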